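/- There exists a 63×63 matrix with all entries equal to 1 or -1 whose determinant equals 2^64 · 15^24 · 19^7. Consequently md(63) ≥ 2^64 · 15^24 · 19^7. -/

import Mathlib

/-- `md n` is the maximal determinant of an `n × n` matrix all of whose
entries are `1` or `-1`. -/
noncomputable def md (n : ℕ) : ℤ :=
  sSup {d : ℤ | ∃ M : Matrix (Fin n) (Fin n) ℤ,
    (∀ i j, M i j = 1 ∨ M i j = -1) ∧ M.det = d}

/-!
Let `S` be a skew matrix of odd order `n` with zero diagonal, off-diagonal entries `±1` and
`S * Sᵀ = n • 1 - J`, where `J` is the all-ones matrix. Such matrices arise from the empty one by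
repeated doubling `n ↦ 2 * n + 1`, which reaches order `15` after four steps.

Replace each diagonal entry of `S` by the all-ones block of order `4` and each entry `±1` by `±C`,
with `C` a symmetric Hadamard matrix of order `4` with constant row sums. Border the result `Q` with
three columns made of copies of the last three columns of a normalized Hadamard matrix of
order `4`, with the transposed rows, and with an all-ones corner. The border is orthogonal to the
rows of `Q`, so the square of the determinant is the product of the determinants of the Gram
matrices of the upper and the lower rows with the corner set to zero, whatever the corner is. The
lower one is scalar, and the upper one is a scalar matrix plus `(4 • 1 - J) ⊗ₖ J`; comparing the
characteristic polynomials of `A * B` and `B * A` reduces its determinant first to order `n` and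
then to order `1`.
-/

namespace SignMatrix

open Matrix
open scoped Kronecker

section AllOnes

variable {k l m R : Type*}

theorem transpose_of_one [One R] : (of 1 : Matrix k l R)ᵀ = of 1 := rfl

theorem of_one_eq_vecMulVec [MulOneClass R] : (of 1 : Matrix k l R) = vecMulVec 1 1 := by
  ext
  simp

theorem of_one_mul_of_one [Fintype l] [NonAssocSemiring R] :
    (of 1 : Matrix k l R) * (of 1 : Matrix l m R) = (Fintype.card l : R) • of 1 := by
  ext
  simp [mul_apply]

end AllOnes

section Kronecker

variable {R k l m n : Type*} [NonUnitalNonAssocRing R]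

theorem neg_kronecker (A : Matrix k l R) (B : Matrix m n R) : (-A) ⊗ₖ B = -(A ⊗ₖ B) := by
  ext
  simp

theorem sub_kronecker (A₁ A₂ : Matrix k l R) (B : Matrix m n R) :
    (A₁ - A₂) ⊗ₖ B = A₁ ⊗ₖ B - A₂ ⊗ₖ B := by
  ext
  simp [sub_mul]

theorem kronecker_sub (A : Matrix k l R) (B₁ B₂ : Matrix m n R) :
    A ⊗ₖ (B₁ - B₂) = A ⊗ₖ B₁ - A ⊗ₖ B₂ := by
  ext
  simp [mul_sub]

end Kronecker

section Determinants

variable {m n R : Type*} [Fintype m] [DecidableEq m] [Fintype n] [DecidableEq n] [CommRing R]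

theorem det_fromBlocks_mul_det_fromBlocks_zero {A : Matrix m m R} {B : Matrix m n R}
    {C : Matrix n m R} (D : Matrix n n R) (hAC : A * Cᵀ = 0) :
    (fromBlocks A B C D).det * (fromBlocks A B C 0).det =
      (A * Aᵀ + B * Bᵀ).det * (C * Cᵀ).det := by
  rw [← det_transpose (fromBlocks A B C 0), ← det_mul, fromBlocks_transpose, fromBlocks_multiply]
  simp only [hAC, transpose_zero, Matrix.mul_zero, add_zero, det_fromBlocks_zero₁₂]

theorem det_fromBlocks_sq [IsDomain R] {A : Matrix m m R} {B : Matrix m n R} {C : Matrix n m R}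
    (D : Matrix n n R) (hAC : A * Cᵀ = 0)
    (hdet : (A * Aᵀ + B * Bᵀ).det * (C * Cᵀ).det ≠ 0) :
    (fromBlocks A B C D).det ^ 2 = (A * Aᵀ + B * Bᵀ).det * (C * Cᵀ).det := by
  have hD := det_fromBlocks_mul_det_fromBlocks_zero (B := B) D hAC
  have h0 := det_fromBlocks_mul_det_fromBlocks_zero (B := B) 0 hAC
  have hne : (fromBlocks A B C 0).det ≠ 0 := fun h ↦ hdet (by rw [← h0, h, mul_zero])
  rw [sq, ← hD, mul_right_cancel₀ hne (hD.trans h0.symm)]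

theorem det_smul_one_add_mul_comm_of_le (c : R) (A : Matrix m n R) (B : Matrix n m R)
    (hle : Fintype.card n ≤ Fintype.card m) :
    (c • 1 + A * B).det = c ^ (Fintype.card m - Fintype.card n) * (c • 1 + B * A).det := by
  have h := congrArg (Polynomial.eval c) (charpoly_mul_comm_of_le (-A) B hle)
  simpa [eval_charpoly, smul_one_eq_diagonal] using h

theorem det_smul_one_add_vecMulVec [Nonempty m] (c : R) (u v : m → R) :
    (c • 1 + vecMulVec u v).det = c ^ (Fintype.card m - 1) * (c + u ⬝ᵥ v) := by
  have h := det_smul_one_add_mul_comm_of_le c (replicateCol Unit u) (replicateRow Unit v)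
    (by simpa using Nat.succ_le_of_lt Fintype.card_pos)
  simpa [← vecMulVec_eq, dotProduct_comm] using h

theorem det_smul_one_add_kronecker_vecMulVec [Nonempty n] (c : R) (N : Matrix m m R)
    (u v : n → R) :
    (c • 1 + N ⊗ₖ vecMulVec u v).det =
      c ^ (Fintype.card m * Fintype.card n - Fintype.card m) * (c • 1 + (u ⬝ᵥ v) • N).det := by
  let P : Matrix (m × n) (m × Unit) R := N ⊗ₖ replicateCol Unit u
  let Q : Matrix (m × Unit) (m × n) R := 1 ⊗ₖ replicateRow Unit v
  have hle : Fintype.card (m × Unit) ≤ Fintype.card (m × n) := by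
    simpa using Nat.le_mul_of_pos_right _ Fintype.card_pos
  have hPQ : P * Q = N ⊗ₖ vecMulVec u v := by
    rw [← mul_kronecker_mul, Matrix.mul_one, vecMulVec_eq Unit]
  have hQP : c • 1 + Q * P =
      (c • 1 + (u ⬝ᵥ v) • N).submatrix (Equiv.prodPUnit m) (Equiv.prodPUnit m) := by
    ext ⟨i, -⟩ ⟨j, -⟩
    simp [P, Q, ← mul_kronecker_mul, one_apply, dotProduct_comm, mul_comm]
  rw [← hPQ, det_smul_one_add_mul_comm_of_le c P Q hle, hQP, det_submatrix_equiv_self]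
  simp

end Determinants

section SkewConferenceCore

variable {ι : Type*} [Fintype ι] [DecidableEq ι]

/-- Skew matrices `S` with entries `±1` off the diagonal and `S * Sᵀ = n • 1 - J`, where `n` is the
order and `J = of 1`: what remains of a skew conference matrix of order `n + 1`, normalized to have
first row `(0, 1, …, 1)`, after deleting the first row and column. -/
structure IsSkewConferenceCore (S : Matrix ι ι ℤ) : Prop where
  transpose_eq_neg : Sᵀ = -S
  apply_eq_one_or_neg_one : ∀ i j, i ≠ j → S i j = 1 ∨ S i j = -1
  mul_transpose : S * Sᵀ = (Fintype.card ι : ℤ) • 1 - of 1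

theorem isSkewConferenceCore_of_isEmpty [IsEmpty ι] (S : Matrix ι ι ℤ) :
    IsSkewConferenceCore S :=
  ⟨Subsingleton.elim _ _, isEmptyElim, Subsingleton.elim _ _⟩

/-- The block matrix with rows `(S, S + 1, -𝟏)`, `(S - 1, -S, 𝟏)` and `(𝟏ᵀ, -𝟏ᵀ, 0)`, which turns
a skew conference core of order `n` into one of order `2 * n + 1`. -/
def doubled (S : Matrix ι ι ℤ) : Matrix ((ι ⊕ ι) ⊕ Unit) ((ι ⊕ ι) ⊕ Unit) ℤ :=
  fromBlocks (fromBlocks S (S + 1) (S - 1) (-S)) (fromRows (-of 1) (of 1))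
    (fromCols (of 1) (-of 1)) 0

namespace IsSkewConferenceCore

variable {S : Matrix ι ι ℤ} (hS : IsSkewConferenceCore S)
include hS

theorem apply_self (i : ι) : S i i = 0 := by
  have h := congrFun₂ hS.transpose_eq_neg i i
  rw [transpose_apply, neg_apply] at h
  lia

theorem mul_self : S * S = of 1 - (Fintype.card ι : ℤ) • 1 := by
  have h := hS.mul_transpose
  rwa [hS.transpose_eq_neg, Matrix.mul_neg, neg_eq_iff_eq_neg, neg_sub] at h

theorem mul_of_one {κ : Type*} : S * (of 1 : Matrix ι κ ℤ) = 0 := by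
  have hS_S_one : S * (S * (of 1 : Matrix ι κ ℤ)) = 0 := by
    rw [← Matrix.mul_assoc, hS.mul_self, Matrix.sub_mul, of_one_mul_of_one, Matrix.smul_mul,
      Matrix.one_mul, sub_self]
  rw [← conjTranspose_mul_self_eq_zero, conjTranspose_eq_transpose_of_trivial, transpose_mul,
    hS.transpose_eq_neg, Matrix.mul_assoc, Matrix.neg_mul, hS_S_one, neg_zero, Matrix.mul_zero]

theorem of_one_mul {κ : Type*} : (of 1 : Matrix κ ι ℤ) * S = 0 := by
  have h := congrArg transpose (hS.mul_of_one (κ := κ))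
  rw [transpose_mul, hS.transpose_eq_neg, Matrix.mul_neg, transpose_zero, neg_eq_zero] at h
  exact h

theorem transpose_doubled : (doubled S)ᵀ = -doubled S := by
  simp only [doubled, fromBlocks_transpose, transpose_add, transpose_sub, transpose_neg,
    hS.transpose_eq_neg, transpose_one, transpose_zero, transpose_fromRows, transpose_fromCols,
    transpose_of_one, fromBlocks_neg, fromRows_neg, fromCols_neg, neg_add', neg_sub', neg_neg,
    neg_zero, sub_neg_eq_add]

theorem doubled_apply_eq_one_or_neg_one (i j : (ι ⊕ ι) ⊕ Unit) (hij : i ≠ j) :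
    doubled S i j = 1 ∨ doubled S i j = -1 := by
  have hoff := hS.apply_eq_one_or_neg_one
  rcases i with (i | i) | ⟨⟩ <;> rcases j with (j | j) | ⟨⟩
  · simpa [doubled] using hoff i j (by simpa using hij)
  · rcases eq_or_ne i j with rfl | h
    · simp [doubled, hS.apply_self]
    · simpa [doubled, h] using hoff i j h
  · simp [doubled]
  · rcases eq_or_ne i j with rfl | h
    · simp [doubled, hS.apply_self]
    · simpa [doubled, h] using hoff i j h
  · simpa [doubled, neg_eq_iff_eq_neg, or_comm] using hoff i j (by simpa using hij)
  · simp [doubled]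
  · simp [doubled]
  · simp [doubled]
  · contradiction

theorem doubled_mul_transpose :
    doubled S * (doubled S)ᵀ = (Fintype.card ((ι ⊕ ι) ⊕ Unit) : ℤ) • 1 - of 1 := by
  simp only [doubled, fromBlocks_transpose, hS.transpose_eq_neg, transpose_fromRows,
    transpose_fromCols, transpose_neg, transpose_add, transpose_sub, transpose_one,
    transpose_of_one, transpose_zero, fromBlocks_multiply, fromRows_mul_fromCols,
    fromCols_mul_fromRows, fromBlocks_mul_fromRows, fromCols_mul_fromBlocks, fromBlocks_add,
    Matrix.add_mul, Matrix.mul_add, Matrix.mul_sub, Matrix.sub_mul, Matrix.mul_one,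
    Matrix.one_mul, Matrix.neg_mul, Matrix.mul_neg, Matrix.mul_zero, Matrix.zero_mul,
    hS.mul_of_one, hS.of_one_mul, hS.mul_self, of_one_mul_of_one]
  ext ((i | i) | -) ((j | j) | -) <;>
    simp only [fromBlocks_apply₁₁, fromBlocks_apply₁₂, fromBlocks_apply₂₁, fromBlocks_apply₂₂,
      Matrix.add_apply, Matrix.sub_apply, Matrix.neg_apply, Matrix.smul_apply, Matrix.zero_apply,
      fromRows_apply_inl, fromRows_apply_inr, fromCols_apply_inl, fromCols_apply_inr, of_apply,
      Pi.one_apply, Fintype.card_sum, Fintype.card_unit, Nat.cast_add, Nat.cast_one,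
      smul_eq_mul, one_apply, Sum.inl.injEq, Sum.inr.injEq, reduceCtorEq] <;>
    grind

theorem double : IsSkewConferenceCore (doubled S) :=
  ⟨hS.transpose_doubled, hS.doubled_apply_eq_one_or_neg_one, hS.doubled_mul_transpose⟩

end IsSkewConferenceCore

end SkewConferenceCore

/-- All entries are `1` or `-1`, as in the definition of `md`; the matrix may be rectangular. -/
def IsSignMatrix {m n : Type*} (M : Matrix m n ℤ) : Prop := ∀ i j, M i j = 1 ∨ M i j = -1

theorem IsSignMatrix.exists_det_eq_of_sq_eq_sq {n : Type*} [Fintype n] [DecidableEq n] [Nonempty n]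
    {M : Matrix n n ℤ} (hM : IsSignMatrix M) {d : ℤ} (hd : M.det ^ 2 = d ^ 2) :
    ∃ N : Matrix n n ℤ, IsSignMatrix N ∧ N.det = d := by
  rcases eq_or_eq_neg_of_sq_eq_sq _ _ hd with h | h
  · exact ⟨M, hM, h⟩
  · obtain ⟨i₀⟩ := ‹Nonempty n›
    refine ⟨M.updateRow i₀ ((-1 : ℤ) • M i₀), fun i j ↦ ?_, ?_⟩
    · rcases eq_or_ne i i₀ with rfl | hi
      · simpa [neg_eq_iff_eq_neg, or_comm] using hM i j
      · simpa [hi] using hM i j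
    · rw [det_updateRow_smul, updateRow_eq_self, h]
      ring

theorem IsSignMatrix.det_le_md {n : ℕ} {M : Matrix (Fin n) (Fin n) ℤ} (hM : IsSignMatrix M) :
    M.det ≤ md n := by
  refine le_csSup ⟨n.factorial, ?_⟩ ⟨M, hM, rfl⟩
  rintro _ ⟨N, hN, rfl⟩
  have h := det_le (A := N) (abv := .abs) (x := 1) fun i j ↦ by
    rcases hN i j with h | h <;> simp [h]
  simpa using (le_abs_self _).trans h

/-- A normalized Hadamard matrix of order `4` without its first column, which is all ones. -/
def hadamardTail : Matrix (Fin 4) (Fin 3) ℤ := !![1, 1, 1; 1, -1, -1; -1, 1, -1; -1, -1, 1]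

theorem of_one_mul_hadamardTail {k : Type*} : (of 1 : Matrix k (Fin 4) ℤ) * hadamardTail = 0 := by
  ext i j
  fin_cases j <;> simp [hadamardTail, mul_apply, Fin.sum_univ_four]

theorem hadamardTail_mul_transpose : hadamardTail * hadamardTailᵀ = (4 : ℤ) • 1 - of 1 := by
  decide

theorem hadamardTail_transpose_mul : hadamardTailᵀ * hadamardTail = (4 : ℤ) • 1 := by
  decide

/-- The circulant Hadamard matrix of order `4`; it is symmetric and has constant row sum `2`. -/
def circulantHadamard : Matrix (Fin 4) (Fin 4) ℤ := of fun i j ↦ if i = j then -1 else 1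

theorem circulantHadamard_transpose : circulantHadamardᵀ = circulantHadamard := by
  decide

theorem circulantHadamard_mul_self : circulantHadamard * circulantHadamard = (4 : ℤ) • 1 := by
  decide

theorem circulantHadamard_mul_of_one :
    circulantHadamard * (of 1 : Matrix (Fin 4) (Fin 4) ℤ) = (2 : ℤ) • of 1 := by
  decide

theorem of_one_mul_circulantHadamard :
    (of 1 : Matrix (Fin 4) (Fin 4) ℤ) * circulantHadamard = (2 : ℤ) • of 1 := by
  decide

section BorderedQuadruple

variable {ι : Type*}

/-- The matrix obtained from `S` by replacing a diagonal entry by an all-ones block of order `4` and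
an off-diagonal entry `s` by `s • circulantHadamard`. -/
def quadruple [DecidableEq ι] (S : Matrix ι ι ℤ) : Matrix (ι × Fin 4) (ι × Fin 4) ℤ :=
  1 ⊗ₖ of 1 + S ⊗ₖ circulantHadamard

/-- Copies of `hadamardTail`, one below the other. The columns are indexed by `Unit × Fin 3` so that
the matrix is a Kronecker product. -/
def hadamardBorder (ι : Type*) : Matrix (ι × Fin 4) (Unit × Fin 3) ℤ :=
  of 1 ⊗ₖ hadamardTail

/-- The sign matrix of order `4 * n + 3` built from a skew conference core `S` of order `n`: the
block matrix of `quadruple S`, the border and its transpose, and an all-ones corner. -/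
def borderedQuadruple [DecidableEq ι] (S : Matrix ι ι ℤ) :
    Matrix ((ι × Fin 4) ⊕ (Unit × Fin 3)) ((ι × Fin 4) ⊕ (Unit × Fin 3)) ℤ :=
  fromBlocks (quadruple S) (hadamardBorder ι) (hadamardBorder ι)ᵀ (of 1)

theorem hadamardBorder_mul_transpose :
    hadamardBorder ι * (hadamardBorder ι)ᵀ = of 1 ⊗ₖ ((4 : ℤ) • 1 - of 1) := by
  rw [hadamardBorder, ← kroneckerMap_transpose, ← mul_kronecker_mul, transpose_of_one,
    of_one_mul_of_one, hadamardTail_mul_transpose, Fintype.card_unit, Nat.cast_one, one_smul]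

theorem det_transpose_mul_hadamardBorder [Fintype ι] :
    ((hadamardBorder ι)ᵀ * hadamardBorder ι).det = (4 * Fintype.card ι : ℤ) ^ 3 := by
  rw [hadamardBorder, ← kroneckerMap_transpose, ← mul_kronecker_mul, transpose_of_one,
    of_one_mul_of_one, hadamardTail_transpose_mul, det_kronecker, det_smul, det_smul]
  simp [mul_pow, mul_comm]

namespace IsSkewConferenceCore

variable [Fintype ι] [DecidableEq ι] {S : Matrix ι ι ℤ} (hS : IsSkewConferenceCore S)
include hS

theorem isSignMatrix_borderedQuadruple : IsSignMatrix (borderedQuadruple S) := by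
  have hK : IsSignMatrix hadamardTail := by
    simp [IsSignMatrix, hadamardTail, Fin.forall_fin_succ]
  have hC : IsSignMatrix circulantHadamard := fun a b ↦ by
    by_cases h : a = b <;> simp [circulantHadamard, h]
  rintro (⟨i, a⟩ | ⟨⟨⟩, a⟩) (⟨j, b⟩ | ⟨⟨⟩, b⟩)
  · rcases eq_or_ne i j with rfl | hij
    · simp [borderedQuadruple, quadruple, hS.apply_self]
    · rcases hS.apply_eq_one_or_neg_one i j hij with h | h <;> rcases hC a b with h' | h' <;>
        simp [borderedQuadruple, quadruple, hij, h, h']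
  · simpa [borderedQuadruple, hadamardBorder] using hK a b
  · simpa [borderedQuadruple, hadamardBorder] using hK b a
  · simp [borderedQuadruple]

theorem quadruple_mul_hadamardBorder : quadruple S * hadamardBorder ι = 0 := by
  rw [quadruple, hadamardBorder, Matrix.add_mul, ← mul_kronecker_mul, ← mul_kronecker_mul,
    hS.mul_of_one, of_one_mul_hadamardTail, kronecker_zero, zero_kronecker, add_zero]

theorem quadruple_mul_transpose :
    quadruple S * (quadruple S)ᵀ =
      (4 * Fintype.card ι : ℤ) • 1 + (4 : ℤ) • 1 ⊗ₖ of 1 - (4 : ℤ) • of 1 ⊗ₖ 1 := by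
  simp only [quadruple, transpose_add, ← kroneckerMap_transpose, transpose_one, transpose_of_one,
    circulantHadamard_transpose, hS.transpose_eq_neg, Matrix.add_mul, Matrix.mul_add,
    ← mul_kronecker_mul, Matrix.one_mul, Matrix.mul_one, Matrix.mul_neg, hS.mul_self,
    of_one_mul_of_one, circulantHadamard_mul_self, circulantHadamard_mul_of_one,
    of_one_mul_circulantHadamard, ← one_kronecker_one, sub_kronecker, neg_kronecker,
    kronecker_smul, smul_kronecker, Fintype.card_fin]
  module

theorem quadruple_mul_transpose_add_hadamardBorder :
    quadruple S * (quadruple S)ᵀ + hadamardBorder ι * (hadamardBorder ι)ᵀ =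
      (4 * Fintype.card ι : ℤ) • 1 + ((4 : ℤ) • 1 - of 1 : Matrix ι ι ℤ) ⊗ₖ of 1 := by
  rw [hS.quadruple_mul_transpose, hadamardBorder_mul_transpose, kronecker_sub, sub_kronecker,
    kronecker_smul, smul_kronecker]
  module

theorem det_quadruple_mul_transpose_add_hadamardBorder [Nonempty ι] :
    (quadruple S * (quadruple S)ᵀ + hadamardBorder ι * (hadamardBorder ι)ᵀ).det =
      (4 * Fintype.card ι : ℤ) ^ (3 * Fintype.card ι) * 16 *
        (4 * (Fintype.card ι + 4) : ℤ) ^ (Fintype.card ι - 1) := by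
  have hsum : (4 * Fintype.card ι : ℤ) • 1 + (4 : ℤ) • ((4 : ℤ) • 1 - vecMulVec 1 1) =
      (4 * (Fintype.card ι + 4) : ℤ) • (1 : Matrix ι ι ℤ) + vecMulVec ((-4 : ℤ) • 1) 1 := by
    rw [smul_vecMulVec]
    module
  have hdot : (1 : Fin 4 → ℤ) ⬝ᵥ 1 = 4 := by simp
  have hexp : Fintype.card ι * Fintype.card (Fin 4) - Fintype.card ι = 3 * Fintype.card ι := by
    rw [Fintype.card_fin]
    lia
  rw [hS.quadruple_mul_transpose_add_hadamardBorder, of_one_eq_vecMulVec, of_one_eq_vecMulVec,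
    det_smul_one_add_kronecker_vecMulVec, hdot, hsum, det_smul_one_add_vecMulVec, hexp,
    smul_dotProduct, one_dotProduct_one]
  ring

theorem det_borderedQuadruple_sq [Nonempty ι] :
    (borderedQuadruple S).det ^ 2 =
      (4 * Fintype.card ι : ℤ) ^ (3 * (Fintype.card ι + 1)) * 16 *
        (4 * (Fintype.card ι + 4) : ℤ) ^ (Fintype.card ι - 1) := by
  have htop := hS.det_quadruple_mul_transpose_add_hadamardBorder
  have hbottom := det_transpose_mul_hadamardBorder (ι := ι)
  rw [borderedQuadruple, det_fromBlocks_sq, transpose_transpose, htop, hbottom]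
  · ring
  · exact hS.quadruple_mul_hadamardBorder
  · rw [transpose_transpose, htop, hbottom]
    positivity

theorem det_borderedQuadruple_sq_of_card_eq {r : ℕ} (hcard : Fintype.card ι = 2 * r + 1) :
    (borderedQuadruple S).det ^ 2 =
      (2 ^ (8 * r + 8) * (2 * r + 1) ^ (3 * r + 3) * (2 * r + 5) ^ r : ℤ) ^ 2 := by
  have : Nonempty ι := Fintype.card_pos_iff.mp (by lia)
  have hcast : ((2 * r + 1 : ℕ) : ℤ) = 2 * r + 1 := by push_cast; rfl
  have hadd : (2 * r + 1 + 4 : ℤ) = 2 * r + 5 := by ring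
  rw [hS.det_borderedQuadruple_sq, hcard, Nat.add_sub_cancel, hcast, hadd, mul_pow, mul_pow 4,
    show (4 : ℤ) = 2 ^ 2 from rfl, ← pow_mul, ← pow_mul]
  generalize (2 * r + 1 : ℤ) = a, (2 * r + 5 : ℤ) = b
  ring

end IsSkewConferenceCore

end BorderedQuadruple

end SignMatrix

open SignMatrix in
theorem stmt_12_general {ι : Type*} [Fintype ι] [DecidableEq ι] {S : Matrix ι ι ℤ}
    (hS : IsSkewConferenceCore S) {r : ℕ} (hcard : Fintype.card ι = 2 * r + 1) :
    (∃ M : Matrix (Fin (8 * r + 7)) (Fin (8 * r + 7)) ℤ,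
      (∀ i j, M i j = 1 ∨ M i j = -1) ∧
        M.det = 2 ^ (8 * r + 8) * (2 * r + 1) ^ (3 * r + 3) * (2 * r + 5) ^ r) ∧
    (2 ^ (8 * r + 8) * (2 * r + 1) ^ (3 * r + 3) * (2 * r + 5) ^ r : ℤ) ≤ md (8 * r + 7) := by
  obtain ⟨N, hN, hdet⟩ := hS.isSignMatrix_borderedQuadruple.exists_det_eq_of_sq_eq_sq
    (hS.det_borderedQuadruple_sq_of_card_eq hcard)
  have hcard' : Fintype.card ((ι × Fin 4) ⊕ (Unit × Fin 3)) = 8 * r + 7 := by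
    simp only [Fintype.card_sum, Fintype.card_prod, Fintype.card_fin, Fintype.card_unit, hcard]
    lia
  let e := (Fintype.equivFinOfCardEq hcard').symm
  have hM : IsSignMatrix (N.submatrix e e) := fun i j ↦ hN (e i) (e j)
  have hMdet := (Matrix.det_submatrix_equiv_self e N).trans hdet
  exact ⟨⟨_, hM, hMdet⟩, hMdet ▸ hM.det_le_md⟩

theorem stmt_12 :
    (∃ M : Matrix (Fin 63) (Fin 63) ℤ,
      (∀ i j, M i j = 1 ∨ M i j = -1) ∧ M.det = 2^64 * 15^24 * 19^7) ∧
    (2^64 * 15^24 * 19^7 : ℤ) ≤ md 63 := by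
  have hS₀ := SignMatrix.isSkewConferenceCore_of_isEmpty (0 : Matrix Empty Empty ℤ)
  exact stmt_12_general hS₀.double.double.double.double (r := 7) rfl
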